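/- Let L = (S, ι, →) be an LTS and let norm_fdr(L) = (S', ι', →') be its failures-divergences normal form. For all sequences ρ ∈ Act* and all states U ∈ S', if ι' ⟶ρ U in norm_fdr(L) and no state of U diverges, then ρ ∉ divergences(L). -/

import Mathlib

/-- A labelled transition system with states `S` and visible actions `Act`.
Transition labels are `Option Act`, where `none` plays the role of the
internal action τ and `some a` is the visible action `a ∈ Act`. -/
structure LTS (S : Type*) (Act : Type*) where
  init : S
  tr : S → Option Act → S → Prop

namespace LTS

variable {S S₁ S₂ : Type*} {Act : Type*}

/-- The trace relation: `s ⟶ε t` iff `s = t`, and `s ⟶(σ a) t` iff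
`s ⟶σ u` and `u —a→ t` for some `u`. -/
inductive Trace (L : LTS S Act) : S → List (Option Act) → S → Prop
  | nil (s : S) : Trace L s [] s
  | snoc {s u t : S} {σ : List (Option Act)} {a : Option Act} :
      Trace L s σ u → L.tr u a t → Trace L s (σ ++ [a]) t

/-- The weak transition relation `s ⇒ρ t` for `ρ ∈ Act*`. -/
inductive Weak (L : LTS S Act) : S → List Act → S → Prop
  | refl (s : S) : Weak L s [] s
  | tau {s t : S} : L.tr s none t → Weak L s [] t
  | act {s t : S} {a : Act} : L.tr s (some a) t → Weak L s [a] t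
  | comp {s u t : S} {ρ σ : List Act} :
      Weak L s ρ u → Weak L u σ t → Weak L s (ρ ++ σ) t

/-- A state is reachable iff some trace leads from the initial state to it. -/
def Reachable (L : LTS S Act) (s : S) : Prop := ∃ σ, L.Trace L.init σ s

/-- A state is stable iff it has no outgoing τ-transition. -/
def Stable (L : LTS S Act) (s : S) : Prop := ¬ ∃ t, L.tr s none t

/-- A state diverges iff there is an infinite sequence of τ-transitions from it. -/
def Diverges (L : LTS S Act) (s : S) : Prop :=
  ∃ f : ℕ → S, f 0 = s ∧ ∀ n, L.tr (f n) none (f (n + 1))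

/-- The weak traces of an LTS. -/
def weaktraces (L : LTS S Act) : Set (List Act) := {ρ | ∃ t, L.Weak L.init ρ t}

/-- The divergences of an LTS: all `ρ σ` such that `ι ⇒ρ t` for a diverging `t`. -/
def divergences (L : LTS S Act) : Set (List Act) :=
  {w | ∃ ρ σ : List Act, w = ρ ++ σ ∧ ∃ t, L.Weak L.init ρ t ∧ L.Diverges t}

/-- The refusals of a (stable) state: all sets `X` of visible actions none of
which is enabled in `s`. -/
def refusals (L : LTS S Act) (s : S) : Set (Set Act) :=
  {X | ∀ a ∈ X, ¬ ∃ t, L.tr s (some a) t}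

/-- The refusals of a set of states. -/
def refusalsSet (L : LTS S Act) (U : Set S) : Set (Set Act) :=
  {X | ∃ s ∈ U, L.Stable s ∧ X ∈ L.refusals s}

/-- The stable failures of an LTS. -/
def failures (L : LTS S Act) : Set (List Act × Set Act) :=
  {p | ∃ t, L.Weak L.init p.1 t ∧ L.Stable t ∧ p.2 ∈ L.refusals t}

/-- The failures with post-divergence details obscured. -/
def failuresBot (L : LTS S Act) : Set (List Act × Set Act) :=
  L.failures ∪ {p | p.1 ∈ L.divergences}

/-- The normal form of an LTS. -/
def norm (L : LTS S Act) : LTS (Set S) Act where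
  init := {s | L.Weak L.init [] s}
  tr U a V := ∃ b : Act, a = some b ∧ V = {t | ∃ s ∈ U, L.Weak s [b] t}

/-- The failures-divergences normal form of an LTS. -/
def normFdr (L : LTS S Act) : LTS (Set S) Act where
  init := {s | L.Weak L.init [] s}
  tr U a V := ∃ b : Act, a = some b ∧ (¬ ∃ s ∈ U, L.Diverges s) ∧
      V = {t | ∃ s ∈ U, L.Weak s [b] t}

/-- The product of two LTSs. -/
def prod (L₁ : LTS S₁ Act) (L₂ : LTS S₂ Act) : LTS (S₁ × S₂) Act where
  init := (L₁.init, L₂.init)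
  tr p a q :=
    (a = none ∧ q.1 = p.1 ∧ L₂.tr p.2 none q.2) ∨
    (∃ b : Act, a = some b ∧ L₁.tr p.1 (some b) q.1 ∧ L₂.tr p.2 (some b) q.2)

end LTS

/-! A word `ρ ++ σ` read by the normal form passes through the set of all states weakly reachable
by `ρ`. If no state of the final set diverges, then neither does any state of this one: either it
is left by a transition, which the normal form only allows from sets without diverging states, or
it is already the final set. -/

namespace LTS

variable {S Act : Type*} {L : LTS S Act}

theorem trace_nil_iff {s t : S} : L.Trace s [] t ↔ s = t := by
  refine ⟨fun h ↦ ?_, fun h ↦ h ▸ .nil s⟩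
  generalize hw : ([] : List (Option Act)) = w at h
  cases h with
  | nil => rfl
  | snoc => simp at hw

theorem trace_concat_iff {s t : S} {σ : List (Option Act)} {a : Option Act} :
    L.Trace s (σ ++ [a]) t ↔ ∃ u, L.Trace s σ u ∧ L.tr u a t := by
  refine ⟨fun h ↦ ?_, fun ⟨_, hsu, hut⟩ ↦ .snoc hsu hut⟩
  generalize hw : σ ++ [a] = w at h
  cases h with
  | nil => simp at hw
  | snoc hsu hut =>
    obtain ⟨rfl, ⟨⟩⟩ := List.append_inj' hw rfl
    exact ⟨_, hsu, hut⟩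

theorem trace_append_iff {s t : S} {ρ σ : List (Option Act)} :
    L.Trace s (ρ ++ σ) t ↔ ∃ u, L.Trace s ρ u ∧ L.Trace u σ t := by
  induction σ using List.reverseRecOn generalizing t with
  | nil => simp [trace_nil_iff]
  | append_singleton σ a ih =>
    simp only [← List.append_assoc, trace_concat_iff, ih]
    grind

theorem weak_append_iff {s t : S} {ρ σ : List Act} :
    L.Weak s (ρ ++ σ) t ↔ ∃ u, L.Weak s ρ u ∧ L.Weak u σ t := by
  refine ⟨fun h ↦ ?_, fun ⟨_, hsu, hut⟩ ↦ .comp hsu hut⟩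
  generalize hw : ρ ++ σ = w at h
  induction h generalizing ρ σ with
  | refl s =>
    obtain ⟨rfl, rfl⟩ := List.append_eq_nil_iff.mp hw
    exact ⟨s, .refl s, .refl s⟩
  | @tau s t hst =>
    obtain ⟨rfl, rfl⟩ := List.append_eq_nil_iff.mp hw
    exact ⟨s, .refl s, .tau hst⟩
  | @act s t a hst =>
    rcases List.append_eq_singleton_iff.mp hw with ⟨rfl, rfl⟩ | ⟨rfl, rfl⟩
    · exact ⟨s, .refl s, .act hst⟩
    · exact ⟨t, .act hst, .refl t⟩
  | comp hsu hut ih_su ih_ut =>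
    rcases List.append_eq_append_iff.mp hw with ⟨μ, rfl, rfl⟩ | ⟨μ, rfl, rfl⟩
    · obtain ⟨v, hsv, hvu⟩ := ih_su rfl
      exact ⟨v, hsv, .comp hvu hut⟩
    · obtain ⟨v, huv, hvt⟩ := ih_ut rfl
      exact ⟨v, .comp hsu huv, hvt⟩

variable (L) in
/-- The weak successors of a set of states: all `t` such that `s ⇒ρ t` for some `s ∈ U`. A word
`ρ` can lead from the initial state of the normal form only to `L.weakPost {L.init} ρ`. -/
def weakPost (U : Set S) (ρ : List Act) : Set S := {t | ∃ s ∈ U, L.Weak s ρ t}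

theorem mem_weakPost {U : Set S} {ρ : List Act} {t : S} :
    t ∈ L.weakPost U ρ ↔ ∃ s ∈ U, L.Weak s ρ t :=
  Iff.rfl

theorem weakPost_append (U : Set S) (ρ σ : List Act) :
    L.weakPost U (ρ ++ σ) = L.weakPost (L.weakPost U ρ) σ := by
  ext t
  simp only [mem_weakPost, weak_append_iff]
  grind

theorem mem_weakPost_singleton {s t : S} {ρ : List Act} :
    t ∈ L.weakPost {s} ρ ↔ L.Weak s ρ t := by
  simp [mem_weakPost]

theorem normFdr_init : L.normFdr.init = L.weakPost {L.init} [] :=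
  Set.ext fun _ ↦ mem_weakPost_singleton.symm

theorem normFdr_tr_some_iff {U V : Set S} {a : Act} :
    L.normFdr.tr U (some a) V ↔ (¬ ∃ s ∈ U, L.Diverges s) ∧ V = L.weakPost U [a] := by
  simp [normFdr, weakPost]

theorem eq_weakPost_of_normFdr_trace {U V : Set S} {ρ : List Act}
    (h : L.normFdr.Trace (L.weakPost U []) (ρ.map some) V) : V = L.weakPost U ρ := by
  induction ρ using List.reverseRecOn generalizing V with
  | nil => exact (trace_nil_iff.mp h).symm
  | append_singleton ρ a ih =>
    rw [List.map_append, List.map_singleton, trace_concat_iff] at h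
    obtain ⟨W, hUW, hWV⟩ := h
    rw [weakPost_append, ← ih hUW]
    exact (normFdr_tr_some_iff.mp hWV).2

theorem not_exists_diverges_of_normFdr_trace {U V : Set S} {σ : List (Option Act)}
    (h : L.normFdr.Trace U σ V) (hV : ¬ ∃ s ∈ V, L.Diverges s) : ¬ ∃ s ∈ U, L.Diverges s := by
  induction h with
  | nil => exact hV
  | snoc _ hWV ih =>
    obtain ⟨_, _, hW, _⟩ := hWV
    exact ih hW

end LTS

/-- if `ρ` leads in the failures-divergences normal form to a
state none of whose members diverges, then `ρ` is not a divergence of `L`. -/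
theorem normFdr_trace_not_divergence {S Act : Type*} (L : LTS S Act) :
    ∀ (ρ : List Act) (U : Set S),
      (L.normFdr).Trace (L.normFdr).init (ρ.map some) U →
        (¬ ∃ s ∈ U, L.Diverges s) →
          ρ ∉ L.divergences := by
  rintro _ U hU hdiv ⟨ρ, σ, rfl, t, hρt, ht⟩
  rw [List.map_append, LTS.trace_append_iff] at hU
  obtain ⟨W, hρW, hσU⟩ := hU
  have hW : W = L.weakPost {L.init} ρ :=
    LTS.eq_weakPost_of_normFdr_trace (LTS.normFdr_init ▸ hρW)
  have htW : t ∈ W := hW ▸ LTS.mem_weakPost_singleton.mpr hρt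
  exact LTS.not_exists_diverges_of_normFdr_trace hσU hdiv ⟨t, htW, ht⟩
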